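/- arXiv:math/0310044 — 4 statements merged into one kernel-verified Lean document; each statement's English description precedes it below -/
import Mathlib

section
/- Let k ≥ 1 be an integer and M < ∞. Then there exists a constant C = C(k, M) < ∞ with the following property. Let η be a random variable with values in the nonnegative integers satisfying E[η^k] ≤ M, and let (ξ_j)_{j≥1} be an i.i.d. sequence of random variables with values in {−1, 0, 1}, with the whole sequence independent of η. Set G = Σ_{j=1}^{η} ξ_j − E[η] · E[ξ_1]. Then E[|G|^k] ≤ C · P(ξ_1 ≠ 0). -/
/-!
By the power-mean inequality, `‖∑_{j < n} x_j‖ ^ p ≤ n ^ (p - 1) * ∑_{j < n} ‖x_j‖ ^ p`. Putting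
`n = η` and integrating, each event `{j < η}` is independent of `ξ_j`, so a weighted form of Wald's
identity turns the right-hand side into `E[η ^ p] * E[‖ξ_0‖ ^ p]`; that is,
`‖∑_{j < η} ξ_j‖_p ≤ ‖η‖_p * ‖ξ_0‖_p`. The centering constant obeys the same bound, since the mean
is dominated by the `L^p` norm. Finally `E[‖ξ_0‖ ^ p] ≤ P(ξ_0 ≠ 0)` when `‖ξ_0‖ ≤ 1`.
-/

open MeasureTheory ProbabilityTheory

open scoped ENNReal

lemma enorm_sum_rpow_le {ι E : Type*} [TopologicalSpace E] [ESeminormedAddCommMonoid E]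
    (s : Finset ι) (f : ι → E) {p : ℝ} (hp : 1 ≤ p) :
    ‖∑ i ∈ s, f i‖ₑ ^ p ≤ (s.card : ℝ≥0∞) ^ (p - 1) * ∑ i ∈ s, ‖f i‖ₑ ^ p :=
  calc
    ‖∑ i ∈ s, f i‖ₑ ^ p ≤ (∑ i ∈ s, ‖f i‖ₑ) ^ p := by
      gcongr
      exact enorm_sum_le s f
    _ ≤ (s.card : ℝ≥0∞) ^ (p - 1) * ∑ i ∈ s, ‖f i‖ₑ ^ p :=
      ENNReal.rpow_sum_le_const_mul_sum_rpow s _ hp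

lemma mul_sum_range_eq_tsum_ite (c : ℝ≥0∞) (n : ℕ) (b : ℕ → ℝ≥0∞) :
    c * ∑ j ∈ Finset.range n, b j = ∑' j, (if j < n then c else 0) * b j := by
  rw [tsum_eq_sum (s := Finset.range n) fun j hj => by simp_all, Finset.mul_sum]
  exact Finset.sum_congr rfl fun j hj => by rw [if_pos (Finset.mem_range.mp hj)]

section Moments

variable {Ω E : Type*} [MeasurableSpace Ω] {μ : Measure Ω} [NormedAddCommGroup E] {f : Ω → E}

lemma enorm_integral_le_eLpNorm [NormedSpace ℝ E] [IsProbabilityMeasure μ]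
    (hf : AEStronglyMeasurable f μ) {p : ℝ≥0∞} (hp : 1 ≤ p) : ‖∫ ω, f ω ∂μ‖ₑ ≤ eLpNorm f p μ :=
  calc
    ‖∫ ω, f ω ∂μ‖ₑ ≤ ∫⁻ ω, ‖f ω‖ₑ ∂μ := enorm_integral_le_lintegral_enorm f
    _ = eLpNorm f 1 μ := eLpNorm_one_eq_lintegral_enorm.symm
    _ ≤ eLpNorm f p μ := eLpNorm_le_eLpNorm_of_exponent_le hp hf

lemma integral_norm_rpow_eq_toReal_eLpNorm_rpow (hf : AEStronglyMeasurable f μ) {p : ℝ}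
    (hp : 0 < p) : ∫ ω, ‖f ω‖ ^ p ∂μ = (eLpNorm f (.ofReal p) μ).toReal ^ p := by
  have hnonneg : 0 ≤ ∫ ω, ‖f ω‖ ^ p ∂μ := integral_nonneg fun _ => by positivity
  rw [toReal_eLpNorm hf, lpNorm_eq_integral_norm_rpow_toReal (by simpa using hp)
    ENNReal.ofReal_ne_top hf, ENNReal.toReal_ofReal hp.le, Real.rpow_inv_rpow hnonneg hp.ne']

lemma integral_norm_rpow_le_measureReal_ne_zero [IsFiniteMeasure μ]
    (hf : AEStronglyMeasurable f μ) (hbound : ∀ᵐ ω ∂μ, ‖f ω‖ ≤ 1) {p : ℝ} (hp : 0 < p) :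
    ∫ ω, ‖f ω‖ ^ p ∂μ ≤ μ.real {ω | f ω ≠ 0} := by
  have hsupp : NullMeasurableSet {ω | f ω ≠ 0} μ := hf.nullMeasurableSet_support
  have hmeasure : ∫ ω, {ω | f ω ≠ 0}.indicator 1 ω ∂μ = μ.real {ω | f ω ≠ 0} := by
    simp [integral_indicator₀ hsupp]
  rw [← hmeasure]
  refine integral_mono_of_nonneg (.of_forall fun _ => by positivity)
    ((integrable_const 1).indicator₀ hsupp) ?_
  filter_upwards [hbound] with ω hω
  by_cases h : f ω = 0
  · simp [h, hp.ne']
  · simpa [h] using Real.rpow_le_one (norm_nonneg _) hω hp.le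

end Moments

/-- The random sum `∑_{j < η} ξ_j` of the sequence `ξ` with random number of terms `η`. Terms are
indexed from `0`, so that `ξ 0` plays the role of the paper's `ξ_1`. -/
def randomSum {Ω E : Type*} [AddCommMonoid E] (ξ : ℕ → Ω → E) (η : Ω → ℕ) (ω : Ω) : E :=
  ∑ j ∈ Finset.range (η ω), ξ j ω

section RandomSum

variable {Ω E : Type*} [MeasurableSpace Ω] {μ : Measure Ω} {η : Ω → ℕ} {ξ : ℕ → Ω → E}

lemma lintegral_mul_randomSum {g : ℕ → Ω → ℝ≥0∞} {m : ℝ≥0∞} (w : ℕ → ℝ≥0∞)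
    (hη : AEMeasurable η μ) (hg : ∀ j, AEMeasurable (g j) μ) (hindep : ∀ j, IndepFun η (g j) μ)
    (hm : ∀ j, ∫⁻ ω, g j ω ∂μ = m) :
    ∫⁻ ω, w (η ω) * randomSum g η ω ∂μ = (∫⁻ ω, w (η ω) * η ω ∂μ) * m := by
  let a (j n : ℕ) : ℝ≥0∞ := if j < n then w n else 0
  have ha (j : ℕ) : AEMeasurable (fun ω => a j (η ω)) μ :=
    (measurable_of_countable (a j)).comp_aemeasurable hη
  have hmul (j : ℕ) : ∫⁻ ω, a j (η ω) * g j ω ∂μ = (∫⁻ ω, a j (η ω) ∂μ) * m := by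
    rw [← hm j]
    exact lintegral_mul_eq_lintegral_mul_lintegral_of_indepFun'' (ha j) (hg j)
      ((hindep j).comp (measurable_of_countable (a j)) measurable_id)
  have hweight (n : ℕ) : w n * n = ∑' j, a j n := by
    simpa [a] using mul_sum_range_eq_tsum_ite (w n) n 1
  calc
    ∫⁻ ω, w (η ω) * randomSum g η ω ∂μ = ∫⁻ ω, ∑' j, a j (η ω) * g j ω ∂μ :=
      lintegral_congr fun ω => mul_sum_range_eq_tsum_ite (w (η ω)) (η ω) (g · ω)
    _ = ∑' j, (∫⁻ ω, a j (η ω) ∂μ) * m := by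
      simp_rw [← hmul]
      exact lintegral_tsum fun j => (ha j).mul (hg j)
    _ = (∫⁻ ω, w (η ω) * η ω ∂μ) * m := by
      simp_rw [ENNReal.tsum_mul_right, hweight, lintegral_tsum ha]

lemma aestronglyMeasurable_randomSum [AddCommMonoid E] [TopologicalSpace E] [ContinuousAdd E]
    [TopologicalSpace.PseudoMetrizableSpace E] (hη : AEMeasurable η μ)
    (hξ : ∀ j, AEStronglyMeasurable (ξ j) μ) :
    AEStronglyMeasurable (randomSum ξ η) μ := by
  have hcover : ⋃ n, η ⁻¹' {n} = Set.univ := by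
    rw [← Set.preimage_iUnion, Set.iUnion_of_singleton, Set.preimage_univ]
  rw [← Measure.restrict_univ (μ := μ), ← hcover, aestronglyMeasurable_iUnion_iff]
  intro n
  have hsum : AEStronglyMeasurable (fun ω => ∑ j ∈ Finset.range n, ξ j ω) μ :=
    Finset.aestronglyMeasurable_fun_sum _ fun j _ => hξ j
  refine hsum.restrict.congr ?_
  filter_upwards [ae_restrict_mem₀ (hη.nullMeasurableSet_preimage (measurableSet_singleton n))]
    with ω (hω : η ω = n)
  rw [randomSum, hω]

variable [NormedAddCommGroup E] [MeasurableSpace E]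

lemma lintegral_enorm_randomSum_rpow_le [OpensMeasurableSpace E] (hη : AEMeasurable η μ)
    (hident : ∀ j, IdentDistrib (ξ j) (ξ 0) μ μ) (hindep : ∀ j, IndepFun η (ξ j) μ) {p : ℝ}
    (hp : 1 ≤ p) :
    ∫⁻ ω, ‖randomSum ξ η ω‖ₑ ^ p ∂μ ≤
      (∫⁻ ω, (η ω : ℝ≥0∞) ^ p ∂μ) * ∫⁻ ω, ‖ξ 0 ω‖ₑ ^ p ∂μ := by
  have hmeas : Measurable fun x : E => ‖x‖ₑ ^ p := measurable_enorm.pow_const p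
  have hweight (n : ℕ) : (n : ℝ≥0∞) ^ (p - 1) * n = (n : ℝ≥0∞) ^ p := by
    simpa using (ENNReal.rpow_add_of_nonneg (x := n) (p - 1) 1 (by linarith) zero_le_one).symm
  calc
    ∫⁻ ω, ‖randomSum ξ η ω‖ₑ ^ p ∂μ
        ≤ ∫⁻ ω, (η ω : ℝ≥0∞) ^ (p - 1) * randomSum (fun j ω => ‖ξ j ω‖ₑ ^ p) η ω ∂μ :=
      lintegral_mono fun ω => by
        simpa [randomSum] using enorm_sum_rpow_le (Finset.range (η ω)) (ξ · ω) hp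
    _ = (∫⁻ ω, (η ω : ℝ≥0∞) ^ (p - 1) * η ω ∂μ) * ∫⁻ ω, ‖ξ 0 ω‖ₑ ^ p ∂μ :=
      lintegral_mul_randomSum (fun n => (n : ℝ≥0∞) ^ (p - 1)) hη
        (fun j => hmeas.comp_aemeasurable (hident j).aemeasurable_fst)
        (fun j => (hindep j).comp measurable_id hmeas) fun j => ((hident j).comp hmeas).lintegral_eq
    _ = (∫⁻ ω, (η ω : ℝ≥0∞) ^ p ∂μ) * ∫⁻ ω, ‖ξ 0 ω‖ₑ ^ p ∂μ := by simp_rw [hweight]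

lemma eLpNorm_randomSum_le [OpensMeasurableSpace E] (hη : AEMeasurable η μ)
    (hident : ∀ j, IdentDistrib (ξ j) (ξ 0) μ μ) (hindep : ∀ j, IndepFun η (ξ j) μ) {p : ℝ≥0∞}
    (hp : 1 ≤ p) (hp_top : p ≠ ∞) :
    eLpNorm (randomSum ξ η) p μ ≤ eLpNorm (fun ω => (η ω : ℝ)) p μ * eLpNorm (ξ 0) p μ := by
  have hp_zero : p ≠ 0 := (zero_lt_one.trans_le hp).ne'
  have hp_real : 1 ≤ p.toReal := by simpa using ENNReal.toReal_mono hp_top hp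
  simp_rw [eLpNorm_eq_lintegral_rpow_enorm_toReal hp_zero hp_top, Real.enorm_natCast]
  rw [← ENNReal.mul_rpow_of_nonneg _ _ (by positivity)]
  gcongr
  exact lintegral_enorm_randomSum_rpow_le hη hident hindep hp_real

variable [BorelSpace E] [NormedSpace ℝ E] [IsProbabilityMeasure μ]

lemma eLpNorm_randomSum_sub_le (hη : AEMeasurable η μ) (hξ : AEStronglyMeasurable (ξ 0) μ)
    (hident : ∀ j, IdentDistrib (ξ j) (ξ 0) μ μ) (hindep : ∀ j, IndepFun η (ξ j) μ) {p : ℝ≥0∞}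
    (hp : 1 ≤ p) (hp_top : p ≠ ∞) :
    eLpNorm (fun ω => randomSum ξ η ω - (∫ ω', (η ω' : ℝ) ∂μ) • ∫ ω', ξ 0 ω' ∂μ) p μ ≤
      2 * (eLpNorm (fun ω => (η ω : ℝ)) p μ * eLpNorm (ξ 0) p μ) := by
  set c : E := (∫ ω, (η ω : ℝ) ∂μ) • ∫ ω, ξ 0 ω ∂μ
  have hη_real : AEStronglyMeasurable (fun ω => (η ω : ℝ)) μ :=
    (measurable_from_nat.comp_aemeasurable hη).aestronglyMeasurable
  have hsum : AEStronglyMeasurable (randomSum ξ η) μ :=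
    aestronglyMeasurable_randomSum hη fun j => (hident j).aestronglyMeasurable_iff.mpr hξ
  have hc : ‖c‖ₑ ≤ eLpNorm (fun ω => (η ω : ℝ)) p μ * eLpNorm (ξ 0) p μ := by
    rw [enorm_smul]
    gcongr
    · exact enorm_integral_le_eLpNorm hη_real hp
    · exact enorm_integral_le_eLpNorm hξ hp
  calc
    eLpNorm (fun ω => randomSum ξ η ω - c) p μ
        ≤ eLpNorm (randomSum ξ η) p μ + eLpNorm (fun _ => c) p μ :=
      eLpNorm_sub_le hsum aestronglyMeasurable_const hp
    _ = eLpNorm (randomSum ξ η) p μ + ‖c‖ₑ := by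
      simp [eLpNorm_const c (zero_lt_one.trans_le hp).ne' (NeZero.ne μ)]
    _ ≤ 2 * (eLpNorm (fun ω => (η ω : ℝ)) p μ * eLpNorm (ξ 0) p μ) := by
      rw [two_mul]
      exact add_le_add (eLpNorm_randomSum_le hη hident hindep hp hp_top) hc

lemma integral_norm_randomSum_sub_rpow_le {p : ℝ} (hp : 1 ≤ p) (hη : AEMeasurable η μ)
    (hη_int : Integrable (fun ω => (η ω : ℝ) ^ p) μ) (hξ : MemLp (ξ 0) (.ofReal p) μ)
    (hident : ∀ j, IdentDistrib (ξ j) (ξ 0) μ μ) (hindep : ∀ j, IndepFun η (ξ j) μ) :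
    ∫ ω, ‖randomSum ξ η ω - (∫ ω', (η ω' : ℝ) ∂μ) • ∫ ω', ξ 0 ω' ∂μ‖ ^ p ∂μ ≤
      2 ^ p * (∫ ω, (η ω : ℝ) ^ p ∂μ) * ∫ ω, ‖ξ 0 ω‖ ^ p ∂μ := by
  have hp_pos : 0 < p := zero_lt_one.trans_le hp
  have hη_real : AEStronglyMeasurable (fun ω => (η ω : ℝ)) μ :=
    (measurable_from_nat.comp_aemeasurable hη).aestronglyMeasurable
  have hη_memLp : MemLp (fun ω => (η ω : ℝ)) (.ofReal p) μ := by
    rw [← integrable_norm_rpow_iff hη_real (by simpa using hp_pos) ENNReal.ofReal_ne_top]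
    simpa [hp_pos.le] using hη_int
  have hcentered : AEStronglyMeasurable
      (fun ω => randomSum ξ η ω - (∫ ω', (η ω' : ℝ) ∂μ) • ∫ ω', ξ 0 ω' ∂μ) μ :=
    (aestronglyMeasurable_randomSum hη fun j =>
      (hident j).aestronglyMeasurable_iff.mpr hξ.aestronglyMeasurable).sub
        aestronglyMeasurable_const
  have hη_moment : ∫ ω, (η ω : ℝ) ^ p ∂μ =
      (eLpNorm (fun ω => (η ω : ℝ)) (.ofReal p) μ).toReal ^ p := by
    simpa using integral_norm_rpow_eq_toReal_eLpNorm_rpow hη_real hp_pos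
  rw [integral_norm_rpow_eq_toReal_eLpNorm_rpow hcentered hp_pos,
    integral_norm_rpow_eq_toReal_eLpNorm_rpow hξ.aestronglyMeasurable hp_pos, hη_moment,
    ← Real.mul_rpow (by positivity) (by positivity),
    ← Real.mul_rpow (by positivity) (by positivity)]
  gcongr
  simpa [mul_assoc] using ENNReal.toReal_mono
    (ENNReal.mul_ne_top ENNReal.ofNat_ne_top
      (ENNReal.mul_ne_top hη_memLp.eLpNorm_ne_top hξ.eLpNorm_ne_top))
    (eLpNorm_randomSum_sub_le hη hξ.aestronglyMeasurable hident hindep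
      (ENNReal.one_le_ofReal.mpr hp) ENNReal.ofReal_ne_top)

theorem centered_random_sum_moment_bound_general [CompleteSpace E] {p : ℝ} (hp : 1 ≤ p)
    (hη : AEMeasurable η μ) (hη_int : Integrable (fun ω => (η ω : ℝ) ^ p) μ)
    (hξ : AEStronglyMeasurable (ξ 0) μ) (hbound : ∀ᵐ ω ∂μ, ‖ξ 0 ω‖ ≤ 1)
    (hident : ∀ j, IdentDistrib (ξ j) (ξ 0) μ μ) (hindep : ∀ j, IndepFun η (ξ j) μ) :
    ∫ ω, ‖randomSum ξ η ω - (∫ ω', (η ω' : ℝ) ∂μ) • ∫ ω', ξ 0 ω' ∂μ‖ ^ p ∂μ ≤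
      2 ^ p * (∫ ω, (η ω : ℝ) ^ p ∂μ) * μ.real {ω | ξ 0 ω ≠ 0} := by
  refine (integral_norm_randomSum_sub_rpow_le hp hη hη_int (.of_bound hξ 1 hbound) hident
    hindep).trans ?_
  gcongr
  exact integral_norm_rpow_le_measureReal_ne_zero hξ hbound (zero_lt_one.trans_le hp)

end RandomSum

/-- Lemma 4.7 (abstract form): for every `k ≥ 1` and `M < ∞` there is a constant
`C = C(k, M)` such that for any nonnegative-integer-valued random variable `η`
with `E[η^k] ≤ M` and any i.i.d. sequence `(ξ_j)` with values in `{-1, 0, 1}`,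
independent of `η`, the centered random sum
`G = Σ_{j=1}^{η} ξ_j − E[η]·E[ξ_1]` satisfies `E[|G|^k] ≤ C·P(ξ_1 ≠ 0)`. -/
theorem centered_random_sum_moment_bound (k : ℕ) (hk : 1 ≤ k) (M : ℝ) :
    ∃ C : ℝ, ∀ (Ω : Type) [MeasureSpace Ω] [IsProbabilityMeasure (ℙ : Measure Ω)]
      (η : Ω → ℕ) (ξ : ℕ → Ω → ℝ),
      Measurable η →
      (∀ j, Measurable (ξ j)) →
      (∀ j ω, ξ j ω ∈ ({-1, 0, 1} : Set ℝ)) →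
      iIndepFun ξ ℙ →
      (∀ j, Measure.map (ξ j) ℙ = Measure.map (ξ 0) ℙ) →
      IndepFun η (fun ω => fun j => ξ j ω) ℙ →
      Integrable (fun ω => ((η ω : ℝ)) ^ k) ℙ →
      (∫ ω, ((η ω : ℝ)) ^ k) ≤ M →
      (∫ ω, |(∑ j ∈ Finset.range (η ω), ξ j ω)
              - (∫ ω', (η ω' : ℝ)) * (∫ ω', ξ 0 ω')| ^ k)
        ≤ C * (ℙ {ω | ξ 0 ω ≠ 0}).toReal := by
  refine ⟨2 ^ k * M, fun Ω _ _ η ξ hη hξ hval _ hlaw hindep hint hM => ?_⟩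
  have hbound (ω : Ω) : ‖ξ 0 ω‖ ≤ 1 := by
    rcases hval 0 ω with h | h | (h : ξ 0 ω = 1) <;> simp [h]
  calc
    _ ≤ 2 ^ k * (∫ ω, (η ω : ℝ) ^ k) * (ℙ {ω | ξ 0 ω ≠ 0}).toReal := by
      simpa only [Real.rpow_natCast] using! centered_random_sum_moment_bound_general
        (p := k) (mod_cast hk) hη.aemeasurable (by simpa only [Real.rpow_natCast] using hint)
        (hξ 0).aestronglyMeasurable (.of_forall hbound)
        (fun j => ⟨(hξ j).aemeasurable, (hξ 0).aemeasurable, hlaw j⟩)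
        fun j => hindep.comp measurable_id (measurable_pi_apply j)
    _ ≤ 2 ^ k * M * (ℙ {ω | ξ 0 ω ≠ 0}).toReal := by gcongr
end

section
/- Let k ≥ 1 be an integer and C < ∞. Then there exists a constant C' = C'(k, C) < ∞ with the following property. Let (ζ_m)_{m∈ℤ} be mutually independent nonnegative real random variables, and let (p_m)_{m∈ℤ} be nonnegative reals with Σ_{m∈ℤ} p_m ≤ 1, such that E[ζ_m^j] ≤ C · p_m for all m ∈ ℤ and all integers 1 ≤ j ≤ k. Then E[(Σ_{m∈ℤ} ζ_m)^k] ≤ C'. -/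
open MeasureTheory ProbabilityTheory

/-!
Write `S = ∑ f_m` and expand `S ^ (n + 1) = ∑_m f_m (f_m + (S - f_m)) ^ n` by the binomial theorem.
By independence of `f_m` and `S - f_m`, every term splits as
`(n choose j) E[f_m ^ (n - j + 1)] E[(S - f_m) ^ j]`; the first expectation is at most `q_m` and the
second at most `E[S ^ j]`. Summing over `m` gives
`E[S ^ (n + 1)] ≤ D ∑_{j ≤ n} (n choose j) E[S ^ j]` with `D = ∑_m q_m`. With equality, this is the
recursion satisfied by the moments of the Poisson distribution with mean `D`, which therefore
bound those of `S`. Infinite sums follow by monotone convergence.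
-/

open Finset
open scoped ENNReal

/-- The `n`-th Touchard polynomial evaluated at `x`, which is the `n`-th moment of the Poisson
distribution with mean `x`. It is defined by its binomial recursion, with the sum taken over
`Fin (n + 1)` so that the bound `j < n + 1` is available to the termination check. -/
def touchard {R : Type*} [Semiring R] (x : R) : ℕ → R
  | 0 => 1
  | n + 1 => x * ∑ j : Fin (n + 1), n.choose j * touchard x j

lemma touchard_zero {R : Type*} [Semiring R] (x : R) : touchard x 0 = 1 := by
  rw [touchard]

lemma touchard_succ {R : Type*} [Semiring R] (x : R) (n : ℕ) :
    touchard x (n + 1) = x * ∑ j ∈ range (n + 1), n.choose j * touchard x j := by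
  rw [touchard, sum_range]

lemma touchard_ne_top {D : ℝ≥0∞} (hD : D ≠ ∞) (n : ℕ) : touchard D n ≠ ∞ := by
  induction n using Nat.strong_induction_on with
  | _ n ih =>
    cases n with
    | zero => exact touchard_zero D ▸ ENNReal.one_ne_top
    | succ n =>
      rw [touchard_succ]
      refine ENNReal.mul_ne_top hD <| ENNReal.sum_ne_top.mpr fun j hj ↦ ?_
      exact ENNReal.mul_ne_top (ENNReal.natCast_ne_top _) (ih j (mem_range.mp hj))

section Moments

variable {ι Ω : Type*} {mΩ : MeasurableSpace Ω} {μ : Measure Ω}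

lemma lintegral_mul_add_pow_of_indepFun {X Y : Ω → ℝ≥0∞} (hX : AEMeasurable X μ)
    (hY : AEMeasurable Y μ) (hXY : X ⟂ᵢ[μ] Y) (n : ℕ) :
    ∫⁻ ω, X ω * (X ω + Y ω) ^ n ∂μ =
      ∑ j ∈ range (n + 1), n.choose j * ((∫⁻ ω, X ω ^ (n - j + 1) ∂μ) * ∫⁻ ω, Y ω ^ j ∂μ) := by
  have expand (ω : Ω) : X ω * (X ω + Y ω) ^ n =
      ∑ j ∈ range (n + 1), n.choose j * (X ω ^ (n - j + 1) * Y ω ^ j) := by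
    rw [add_comm, add_pow, mul_sum]
    exact sum_congr rfl fun j _ ↦ by ring
  simp_rw [expand]
  rw [lintegral_finsetSum' _ fun j _ ↦ by fun_prop]
  refine sum_congr rfl fun j _ ↦ ?_
  have indep : (fun ω ↦ X ω ^ (n - j + 1)) ⟂ᵢ[μ] (fun ω ↦ Y ω ^ j) :=
    hXY.comp (measurable_id.pow_const (n - j + 1)) (measurable_id.pow_const j)
  rw [lintegral_const_mul'' _ (by fun_prop),
    lintegral_mul_eq_lintegral_mul_lintegral_of_indepFun'' (by fun_prop) (by fun_prop) indep]

variable {f : ι → Ω → ℝ≥0∞}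

lemma lintegral_finsetSum_pow_succ_of_iIndepFun [DecidableEq ι] (hf : ∀ i, AEMeasurable (f i) μ)
    (hind : iIndepFun f μ) (s : Finset ι) (n : ℕ) :
    ∫⁻ ω, (∑ i ∈ s, f i ω) ^ (n + 1) ∂μ =
      ∑ i ∈ s, ∑ j ∈ range (n + 1), n.choose j *
        ((∫⁻ ω, f i ω ^ (n - j + 1) ∂μ) * ∫⁻ ω, (∑ l ∈ s.erase i, f l ω) ^ j ∂μ) := by
  simp_rw [pow_succ' _ n, sum_mul]
  rw [lintegral_finsetSum' _ fun i _ ↦ by fun_prop]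
  refine sum_congr rfl fun i hi ↦ ?_
  have indep : f i ⟂ᵢ[μ] (fun ω ↦ ∑ l ∈ s.erase i, f l ω) := by
    simpa only [sum_fn] using (hind.indepFun_finsetSum_of_notMem₀ hf (notMem_erase i s)).symm
  have split (ω : Ω) : ∑ l ∈ s, f l ω = f i ω + ∑ l ∈ s.erase i, f l ω :=
    (add_sum_erase s (f · ω) hi).symm
  simp_rw [split]
  exact lintegral_mul_add_pow_of_indepFun (hf i) (by fun_prop) indep n

variable {q : ι → ℝ≥0∞} {D : ℝ≥0∞} {k : ℕ}

lemma lintegral_finsetSum_pow_le_touchard (hf : ∀ i, AEMeasurable (f i) μ)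
    (hind : iIndepFun f μ) (s : Finset ι) (hq : ∑ i ∈ s, q i ≤ D)
    (hmom : ∀ i ∈ s, ∀ j, 1 ≤ j → j ≤ k → ∫⁻ ω, f i ω ^ j ∂μ ≤ q i) :
    ∫⁻ ω, (∑ i ∈ s, f i ω) ^ k ∂μ ≤ touchard D k := by
  classical
  induction k using Nat.strong_induction_on with
  | _ k ih =>
    obtain _ | n := k
    · have := hind.isProbabilityMeasure
      simp [touchard_zero]
    have rest_le (i : ι) (j : ℕ) (hj : j ≤ n) :
        ∫⁻ ω, (∑ l ∈ s.erase i, f l ω) ^ j ∂μ ≤ touchard D j :=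
      calc ∫⁻ ω, (∑ l ∈ s.erase i, f l ω) ^ j ∂μ
          ≤ ∫⁻ ω, (∑ l ∈ s, f l ω) ^ j ∂μ := by gcongr; exact erase_subset i s
        _ ≤ touchard D j := ih j (by lia) fun l hl r hr hrj ↦ hmom l hl r hr (by lia)
    calc ∫⁻ ω, (∑ i ∈ s, f i ω) ^ (n + 1) ∂μ
        = ∑ i ∈ s, ∑ j ∈ range (n + 1), n.choose j *
            ((∫⁻ ω, f i ω ^ (n - j + 1) ∂μ) * ∫⁻ ω, (∑ l ∈ s.erase i, f l ω) ^ j ∂μ) :=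
          lintegral_finsetSum_pow_succ_of_iIndepFun hf hind s n
      _ ≤ ∑ i ∈ s, ∑ j ∈ range (n + 1), n.choose j * (q i * touchard D j) := by
          gcongr with i hi j hj
          · exact hmom i hi _ (by lia) (by lia)
          · exact rest_le i j (mem_range_succ_iff.mp hj)
      _ = (∑ i ∈ s, q i) * ∑ j ∈ range (n + 1), n.choose j * touchard D j := by
          simp_rw [sum_mul_sum, mul_left_comm]
      _ ≤ D * ∑ j ∈ range (n + 1), n.choose j * touchard D j := by gcongr
      _ = touchard D (n + 1) := (touchard_succ D n).symm

lemma lintegral_tsum_pow_eq_iSup [Countable ι] (hf : ∀ i, AEMeasurable (f i) μ) (k : ℕ) :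
    ∫⁻ ω, (∑' i, f i ω) ^ k ∂μ = ⨆ s : Finset ι, ∫⁻ ω, (∑ i ∈ s, f i ω) ^ k ∂μ := by
  have mono : Monotone fun (s : Finset ι) ω ↦ (∑ i ∈ s, f i ω) ^ k :=
    fun s t hst ω ↦ by dsimp only; gcongr
  simp_rw [ENNReal.tsum_eq_iSup_sum, ENNReal.iSup_pow]
  exact lintegral_iSup_directed (fun s ↦ by fun_prop) mono.directed_le

lemma lintegral_tsum_pow_le_touchard [Countable ι] (hf : ∀ i, AEMeasurable (f i) μ)
    (hind : iIndepFun f μ) (hq : ∑' i, q i ≤ D)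
    (hmom : ∀ i j, 1 ≤ j → j ≤ k → ∫⁻ ω, f i ω ^ j ∂μ ≤ q i) :
    ∫⁻ ω, (∑' i, f i ω) ^ k ∂μ ≤ touchard D k := by
  rw [lintegral_tsum_pow_eq_iSup hf]
  exact iSup_le fun s ↦ lintegral_finsetSum_pow_le_touchard hf hind s
    ((ENNReal.sum_le_tsum s).trans hq) fun i _ ↦ hmom i

lemma lintegral_ofReal_pow_eq_ofReal_integral {X : Ω → ℝ} (hX : 0 ≤ᵐ[μ] X) {j : ℕ}
    (hint : Integrable (fun ω ↦ X ω ^ j) μ) :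
    ∫⁻ ω, ENNReal.ofReal (X ω) ^ j ∂μ = ENNReal.ofReal (∫ ω, X ω ^ j ∂μ) := by
  rw [ofReal_integral_eq_lintegral_ofReal hint (hX.mono fun ω hω ↦ pow_nonneg hω j)]
  exact lintegral_congr_ae (hX.mono fun ω hω ↦ (ENNReal.ofReal_pow hω j).symm)

lemma tsum_ofReal_mul_le_ofReal {p : ι → ℝ} (C : ℝ) (hp : ∀ i, 0 ≤ p i) (hps : Summable p)
    (hp1 : ∑' i, p i ≤ 1) : ∑' i, ENNReal.ofReal (C * p i) ≤ ENNReal.ofReal C :=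
  calc ∑' i, ENNReal.ofReal (C * p i)
      = ENNReal.ofReal C * ENNReal.ofReal (∑' i, p i) := by
        simp_rw [ENNReal.ofReal_mul' (hp _), ENNReal.tsum_mul_left,
          ENNReal.ofReal_tsum_of_nonneg hp hps]
    _ ≤ ENNReal.ofReal C := mul_le_of_le_one_right' (ENNReal.ofReal_le_one.mpr hp1)

theorem moment_bound_independent_sum_general [Countable ι] (hk : 1 ≤ k) (C : ℝ) {ζ : ι → Ω → ℝ}
    {p : ι → ℝ} (hζ : ∀ i, 0 ≤ᵐ[μ] ζ i) (hind : iIndepFun ζ μ) (hp : ∀ i, 0 ≤ p i)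
    (hps : Summable p) (hp1 : ∑' i, p i ≤ 1)
    (hmom : ∀ i j, 1 ≤ j → j ≤ k →
      Integrable (fun ω ↦ ζ i ω ^ j) μ ∧ ∫ ω, ζ i ω ^ j ∂μ ≤ C * p i) :
    ∫⁻ ω, (∑' i, ENNReal.ofReal (ζ i ω)) ^ k ∂μ ≤ touchard (ENNReal.ofReal C) k := by
  have hmeas (i : ι) : AEMeasurable (ζ i) μ := by
    simpa only [pow_one] using (hmom i 1 le_rfl hk).1.aemeasurable
  refine lintegral_tsum_pow_le_touchard (fun i ↦ (hmeas i).ennreal_ofReal)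
    (hind.comp (fun _ ↦ ENNReal.ofReal) fun _ ↦ ENNReal.measurable_ofReal)
    (tsum_ofReal_mul_le_ofReal C hp hps hp1) fun i j hj hjk ↦ ?_
  obtain ⟨hint, hle⟩ := hmom i j hj hjk
  rw [lintegral_ofReal_pow_eq_ofReal_integral (hζ i) hint]
  exact ENNReal.ofReal_le_ofReal hle

end Moments

/-- Lemma 4.10 (abstract form): for every integer `k ≥ 1` and `C < ∞` there is a
constant `C' = C'(k, C)` such that for any mutually independent nonnegative
random variables `(ζ_m)_{m ∈ ℤ}` and nonnegative reals `(p_m)` with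
`Σ p_m ≤ 1` and `E[ζ_m^j] ≤ C·p_m` for all `1 ≤ j ≤ k`, one has
`E[(Σ_m ζ_m)^k] ≤ C'`; in particular `Σ_m ζ_m` is a.s. finite. -/
theorem moment_bound_independent_sum (k : ℕ) (hk : 1 ≤ k) (C : ℝ) :
    ∃ C' : ℝ, ∀ (Ω : Type) [MeasureSpace Ω] [IsProbabilityMeasure (ℙ : Measure Ω)]
      (ζ : ℤ → Ω → ℝ) (p : ℤ → ℝ),
      (∀ m, Measurable (ζ m)) →
      (∀ m ω, 0 ≤ ζ m ω) →
      iIndepFun ζ ℙ →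
      (∀ m, 0 ≤ p m) →
      Summable p →
      (∑' m : ℤ, p m) ≤ 1 →
      (∀ m : ℤ, ∀ j : ℕ, 1 ≤ j → j ≤ k →
        Integrable (fun ω => (ζ m ω) ^ j) ℙ ∧ (∫ ω, (ζ m ω) ^ j) ≤ C * p m) →
      (∫⁻ ω, (∑' m : ℤ, ENNReal.ofReal (ζ m ω)) ^ k) ≤ ENNReal.ofReal C' := by
  refine ⟨(touchard (ENNReal.ofReal C) k).toReal, fun Ω _ _ ζ p _ hζ hind hp hps hp1 hmom ↦ ?_⟩
  rw [ENNReal.ofReal_toReal (touchard_ne_top ENNReal.ofReal_ne_top k)]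
  exact moment_bound_independent_sum_general hk C (fun m ↦ ae_of_all _ (hζ m)) hind hp hps hp1 hmom
end

section
/- Let p be a probability mass function on ℤ such that Σ_{x∈ℤ} e^{θx} p(x) < ∞ for all |θ| ≤ δ, for some δ > 0, and let b = Σ_{x∈ℤ} x·p(x). For s > 0, let X_s = Σ_{i=1}^{N} ξ_i, where N is a Poisson random variable with mean s, independent of the i.i.d. sequence (ξ_i)_{i≥1} with common distribution p. Then there exist constants α > 0 and K > 0 such that for all s > 0 and all u ≥ 0: P(X_s ≤ s(b − u)) ≤ exp(−sKu²) if 0 ≤ u ≤ α, and P(X_s ≤ s(b − u)) ≤ exp(−sKu) if u ≥ α. -/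
open MeasureTheory ProbabilityTheory

/-!
The bound is Chernoff's inequality. If the jumps have moment generating function `M` and mean `b`,
then `X_s` has moment generating function `t ↦ exp (s (M t - 1))`. Finite exponential moments give
`M (-θ) ≤ 1 - θ b + C θ²` on a fixed interval `0 ≤ θ ≤ δ / 2`, so that
`P(X_s ≤ s (b - u)) ≤ exp (-s (θ u - C θ²))` for every such `θ`. The maximiser `θ = u / (2 C)` is
available while `u ≤ C δ` and gives the quadratic rate `u² / (4 C)`; for larger `u` the end point
`θ = δ / 2` gives at least the linear rate `δ u / 4`.
-/

open scoped NNReal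

section CompoundSum

variable {Ω Ω' : Type*} [MeasurableSpace Ω] [MeasurableSpace Ω']

/-- The random sum `∑ i < N, ξ i` has a compound distribution: the number `N` of summands has law
`κ` and is independent of the summands `ξ i`, which are independent copies of `X`. Compound Poisson
variables are the case `κ = poissonMeasure s`. The jump distribution is recorded through a variable
`X` on its own probability space `(Ω', μ')`, so that its moments are `mgf X μ'` and `μ'[X]`. -/
structure IsCompoundSum (κ : Measure ℕ) (X : Ω' → ℝ) (μ' : Measure Ω') (N : Ω → ℕ)
    (ξ : ℕ → Ω → ℝ) (μ : Measure Ω) : Prop where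
  hasLaw_count : HasLaw N κ μ
  identDistrib : ∀ i, IdentDistrib (ξ i) X μ μ'
  iIndepFun : iIndepFun ξ μ
  indepFun : IndepFun N (fun ω i => ξ i ω) μ

lemma measurable_sum_range {M : Type*} [AddCommMonoid M] [MeasurableSpace M] [MeasurableAdd₂ M] :
    Measurable fun z : ℕ × (ℕ → M) => ∑ i ∈ Finset.range z.1, z.2 i :=
  measurable_from_prod_countable_right fun n => by
    dsimp only
    fun_prop

namespace IsCompoundSum

variable {κ : Measure ℕ} {X : Ω' → ℝ} {μ' : Measure Ω'} {N : Ω → ℕ} {ξ : ℕ → Ω → ℝ}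
  {μ : Measure Ω} {t : ℝ}

lemma isProbabilityMeasure (h : IsCompoundSum κ X μ' N ξ μ) : IsProbabilityMeasure μ :=
  h.iIndepFun.isProbabilityMeasure

lemma neZero (h : IsCompoundSum κ X μ' N ξ μ) : NeZero μ' := by
  have := h.isProbabilityMeasure
  exact ⟨fun hμ' => by simpa [hμ'] using (h.identDistrib 0).measure_mem_eq .univ⟩

lemma aemeasurable_jumps (h : IsCompoundSum κ X μ' N ξ μ) :
    AEMeasurable (fun ω i => ξ i ω) μ :=
  aemeasurable_pi_lambda _ fun i => (h.identDistrib i).aemeasurable_fst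

lemma hasLaw_prodMk (h : IsCompoundSum κ X μ' N ξ μ) :
    HasLaw (fun ω => (N ω, fun i => ξ i ω)) (κ.prod (μ.map fun ω i => ξ i ω)) μ :=
  have := h.isProbabilityMeasure
  h.indepFun.hasLaw_prod h.hasLaw_count ⟨h.aemeasurable_jumps, rfl⟩

lemma mgf_sum_range (h : IsCompoundSum κ X μ' N ξ μ) (n : ℕ) :
    mgf (fun ω => ∑ i ∈ Finset.range n, ξ i ω) μ t = mgf X μ' t ^ n := by
  have hsum : (fun ω => ∑ i ∈ Finset.range n, ξ i ω) = ∑ i ∈ Finset.range n, ξ i := by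
    ext ω; simp
  rw [hsum, h.iIndepFun.mgf_sum₀ (fun i => (h.identDistrib i).aemeasurable_fst)]
  simp [mgf_congr_of_identDistrib _ _ (h.identDistrib _)]

lemma integral_exp_mul_sum_range (h : IsCompoundSum κ X μ' N ξ μ) (n : ℕ) :
    ∫ x, Real.exp (t * ∑ i ∈ Finset.range n, x i) ∂(μ.map fun ω i => ξ i ω) =
      mgf X μ' t ^ n := by
  rw [integral_map h.aemeasurable_jumps (by fun_prop), ← h.mgf_sum_range n, mgf]

lemma integrable_exp_mul_prod (h : IsCompoundSum κ X μ' N ξ μ)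
    (hX : Integrable (fun ω => Real.exp (t * X ω)) μ')
    (hκ : Integrable (fun n => mgf X μ' t ^ n) κ) :
    Integrable (fun z : ℕ × (ℕ → ℝ) => Real.exp (t * ∑ i ∈ Finset.range z.1, z.2 i))
      (κ.prod (μ.map fun ω i => ξ i ω)) := by
  have := h.isProbabilityMeasure
  have hmeas : Measurable fun z : ℕ × (ℕ → ℝ) =>
      Real.exp (t * ∑ i ∈ Finset.range z.1, z.2 i) :=
    (measurable_sum_range.const_mul t).exp
  rw [integrable_prod_iff hmeas.aestronglyMeasurable]
  refine ⟨.of_forall fun n => .of_integral_ne_zero ?_, ?_⟩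
  · rw [h.integral_exp_mul_sum_range]
    have := h.neZero
    exact (pow_pos (mgf_pos_iff.2 hX) n).ne'
  · simpa only [Real.norm_eq_abs, Real.abs_exp, h.integral_exp_mul_sum_range] using hκ

lemma integrable_exp_mul (h : IsCompoundSum κ X μ' N ξ μ)
    (hX : Integrable (fun ω => Real.exp (t * X ω)) μ')
    (hκ : Integrable (fun n => mgf X μ' t ^ n) κ) :
    Integrable (fun ω => Real.exp (t * ∑ i ∈ Finset.range (N ω), ξ i ω)) μ := by
  have hint := h.integrable_exp_mul_prod hX hκ
  rw [← h.hasLaw_prodMk.map_eq] at hint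
  exact hint.comp_aemeasurable h.hasLaw_prodMk.aemeasurable

theorem mgf_eq_integral_pow (h : IsCompoundSum κ X μ' N ξ μ)
    (hX : Integrable (fun ω => Real.exp (t * X ω)) μ')
    (hκ : Integrable (fun n => mgf X μ' t ^ n) κ) :
    mgf (fun ω => ∑ i ∈ Finset.range (N ω), ξ i ω) μ t = ∫ n, mgf X μ' t ^ n ∂κ := by
  have hint := h.integrable_exp_mul_prod hX hκ
  have := h.isProbabilityMeasure
  calc mgf (fun ω => ∑ i ∈ Finset.range (N ω), ξ i ω) μ t
      = ∫ z, Real.exp (t * ∑ i ∈ Finset.range z.1, z.2 i)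
          ∂κ.prod (μ.map fun ω i => ξ i ω) :=
        h.hasLaw_prodMk.integral_comp hint.aestronglyMeasurable
    _ = ∫ n, mgf X μ' t ^ n ∂κ := by
        rw [integral_prod _ hint]
        exact integral_congr_ae (.of_forall h.integral_exp_mul_sum_range)

end IsCompoundSum

end CompoundSum

section Poisson

lemma integrable_pow_poissonMeasure (s : ℝ≥0) (c : ℝ) :
    Integrable (fun n => c ^ n) (poissonMeasure s) := by
  rw [integrable_poissonMeasure_iff]
  refine ((Real.summable_pow_div_factorial (s * |c|)).mul_left (Real.exp (-s))).congr fun n => ?_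
  rw [norm_pow, Real.norm_eq_abs, mul_pow]
  ring

lemma integral_pow_poissonMeasure (s : ℝ≥0) (c : ℝ) :
    ∫ n, c ^ n ∂(poissonMeasure s) = Real.exp (s * (c - 1)) := by
  calc ∫ n, c ^ n ∂(poissonMeasure s)
      = ∑' n : ℕ, Real.exp (-s) * ((s * c) ^ n / n.factorial) := by
        rw [integral_poissonMeasure]
        congr with n
        rw [smul_eq_mul, mul_pow]
        ring
    _ = Real.exp (-s) * Real.exp (s * c) := by
        rw [tsum_mul_left, Real.exp_eq_exp_ℝ, NormedSpace.exp_eq_tsum_div]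
    _ = Real.exp (s * (c - 1)) := by
        rw [← Real.exp_add]
        ring_nf

variable {Ω Ω' : Type*} [MeasurableSpace Ω] [MeasurableSpace Ω']
  {X : Ω' → ℝ} {μ' : Measure Ω'} {N : Ω → ℕ} {ξ : ℕ → Ω → ℝ} {μ : Measure Ω} {s : ℝ≥0}

namespace IsCompoundSum

theorem measureReal_sum_le_le_exp
    (h : IsCompoundSum (poissonMeasure s) X μ' N ξ μ) {t : ℝ} (ht : t ≤ 0)
    (hX : Integrable (fun ω => Real.exp (t * X ω)) μ') (a : ℝ) :
    μ.real {ω | ∑ i ∈ Finset.range (N ω), ξ i ω ≤ a} ≤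
      Real.exp (-t * a + s * (mgf X μ' t - 1)) := by
  have := h.isProbabilityMeasure
  have hM := integrable_pow_poissonMeasure s (mgf X μ' t)
  rw [Real.exp_add, ← integral_pow_poissonMeasure, ← h.mgf_eq_integral_pow hX hM]
  exact measure_le_le_exp_mul_mgf a ht (h.integrable_exp_mul hX hM)

end IsCompoundSum
end Poisson

section Mgf

lemma exp_le_one_add_add_sq_mul_max (y : ℝ) :
    Real.exp y ≤ 1 + y + y ^ 2 * max 1 (Real.exp y) := by
  have hupper : Real.exp y - 1 ≤ y * Real.exp y := by
    have := mul_le_mul_of_nonneg_right (Real.one_sub_le_exp_neg y) (Real.exp_pos y).le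
    rw [← Real.exp_add, neg_add_cancel, Real.exp_zero] at this
    linarith
  have hlower : y ≤ Real.exp y - 1 := by linarith [Real.add_one_le_exp y]
  have hprod : y * (Real.exp y - 1) ≤ y ^ 2 * max 1 (Real.exp y) := by
    rcases le_total 0 y with hy | hy
    · calc y * (Real.exp y - 1) ≤ y * (y * Real.exp y) := by gcongr
        _ = y ^ 2 * Real.exp y := by ring
        _ ≤ y ^ 2 * max 1 (Real.exp y) := by gcongr; exact le_max_right _ _
    · calc y * (Real.exp y - 1) ≤ y * y := mul_le_mul_of_nonpos_left hlower hy
        _ = y ^ 2 * 1 := by ring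
        _ ≤ y ^ 2 * max 1 (Real.exp y) := by gcongr; exact le_max_left _ _
  linarith

lemma exp_mul_le_max_of_mem_uIcc {r t : ℝ} (ht : t ∈ Set.uIcc 0 r) (x : ℝ) :
    Real.exp (t * x) ≤ max 1 (Real.exp (r * x)) := by
  have hmem : t * x ∈ Set.uIcc 0 (r * x) := by
    simpa only [Set.image_mul_const_uIcc, zero_mul] using Set.mem_image_of_mem (· * x) ht
  rw [← Real.exp_zero, ← Real.exp_monotone.map_max]
  exact Real.exp_le_exp.2 hmem.2

variable {Ω : Type*} [MeasurableSpace Ω] {μ : Measure Ω} {X : Ω → ℝ}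

lemma mgf_le_one_add_mean_add_sq [IsProbabilityMeasure μ] (hX : MemLp X 2 μ) {r t : ℝ}
    (hr : Integrable (fun ω => X ω ^ 2 * Real.exp (r * X ω)) μ) (ht : t ∈ Set.uIcc 0 r) :
    mgf X μ t ≤
      1 + t * μ[X] + t ^ 2 * ∫ ω, X ω ^ 2 * max 1 (Real.exp (r * X ω)) ∂μ := by
  have hmean : Integrable X μ := hX.integrable (by norm_num)
  have hrem : Integrable (fun ω => X ω ^ 2 * max 1 (Real.exp (r * X ω))) μ := by
    refine (hX.integrable_sq.sup hr).congr (.of_forall fun ω => ?_)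
    simp only [Pi.sup_apply, mul_max_of_nonneg _ _ (sq_nonneg _), mul_one]
  have hlin : Integrable (fun ω => 1 + t * X ω) μ := (integrable_const 1).add (hmean.const_mul t)
  have hpointwise (ω : Ω) : Real.exp (t * X ω) ≤
      1 + t * X ω + t ^ 2 * (X ω ^ 2 * max 1 (Real.exp (r * X ω))) := by
    have hmax := max_le (le_max_left _ _) (exp_mul_le_max_of_mem_uIcc ht (X ω))
    calc Real.exp (t * X ω)
        ≤ 1 + t * X ω + (t * X ω) ^ 2 * max 1 (Real.exp (t * X ω)) :=
          exp_le_one_add_add_sq_mul_max _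
      _ ≤ 1 + t * X ω + (t * X ω) ^ 2 * max 1 (Real.exp (r * X ω)) := by gcongr
      _ = _ := by ring
  calc mgf X μ t
      ≤ ∫ ω, 1 + t * X ω + t ^ 2 * (X ω ^ 2 * max 1 (Real.exp (r * X ω))) ∂μ :=
        integral_mono_of_nonneg (.of_forall fun ω => (Real.exp_pos _).le)
          (hlin.add (hrem.const_mul _)) (.of_forall hpointwise)
    _ = _ := by
        rw [integral_add hlin (hrem.const_mul _), integral_const_mul,
          integral_add (integrable_const 1) (hmean.const_mul t), integral_const_mul]
        simp

lemma exists_mgf_neg_le [IsProbabilityMeasure μ] (hX : MemLp X 2 μ) {δ : ℝ} (hδ : 0 < δ)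
    (hexp : Integrable (fun ω => Real.exp (-δ * X ω)) μ) :
    ∃ C, 0 < C ∧ ∀ θ ∈ Set.Icc 0 (δ / 2), mgf X μ (-θ) ≤ 1 - θ * μ[X] + C * θ ^ 2 := by
  have hsq : Integrable (fun ω => X ω ^ 2 * Real.exp (-(δ / 2) * X ω)) μ :=
    integrable_pow_mul_exp_of_integrable_exp_mul (t := δ / 2) (by positivity)
      (by simp) (by convert hexp using 4; ring) 2
  set D := ∫ ω, X ω ^ 2 * max 1 (Real.exp (-(δ / 2) * X ω)) ∂μ
  have hD : 0 ≤ D := integral_nonneg fun ω => by positivity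
  refine ⟨D + 1, add_pos_of_nonneg_of_pos hD one_pos, fun θ hθ => ?_⟩
  have hmem : -θ ∈ Set.uIcc 0 (-(δ / 2)) :=
    Set.mem_uIcc_of_ge (neg_le_neg hθ.2) (neg_nonpos.2 hθ.1)
  nlinarith [mgf_le_one_add_mean_add_sq hX hsq hmem, sq_nonneg θ]

end Mgf

section General

variable {Ω' : Type*} [MeasurableSpace Ω'] {X : Ω' → ℝ} {μ' : Measure Ω'}

lemma IsCompoundSum.measureReal_sum_le_mul_sub_le_exp {Ω : Type*} [MeasurableSpace Ω]
    {N : Ω → ℕ} {ξ : ℕ → Ω → ℝ} {μ : Measure Ω} {s : ℝ≥0}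
    (h : IsCompoundSum (poissonMeasure s) X μ' N ξ μ) {C θ b u r : ℝ} (hθ : 0 ≤ θ)
    (hexp : Integrable (fun ω => Real.exp (-θ * X ω)) μ')
    (hmgf : mgf X μ' (-θ) ≤ 1 - θ * b + C * θ ^ 2) (hr : r ≤ θ * u - C * θ ^ 2) :
    μ.real {ω | ∑ i ∈ Finset.range (N ω), ξ i ω ≤ s * (b - u)} ≤ Real.exp (-(s * r)) := by
  refine (h.measureReal_sum_le_le_exp (neg_nonpos.2 hθ) hexp _).trans (Real.exp_le_exp.2 ?_)
  calc -(-θ) * (s * (b - u)) + s * (mgf X μ' (-θ) - 1)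
      ≤ -(-θ) * (s * (b - u)) + s * (1 - θ * b + C * θ ^ 2 - 1) := by gcongr
    _ = -(s * (θ * u - C * θ ^ 2)) := by ring
    _ ≤ -(s * r) := by gcongr

theorem compound_poisson_lower_tail_bound_general [IsProbabilityMeasure μ'] (hX : MemLp X 2 μ')
    {δ : ℝ} (hδ : 0 < δ) (hexp : Integrable (fun ω => Real.exp (-δ * X ω)) μ') :
    ∃ α : ℝ, 0 < α ∧ ∃ K : ℝ, 0 < K ∧
      ∀ (s : ℝ≥0) (Ω : Type*) [MeasurableSpace Ω] (μ : Measure Ω) (N : Ω → ℕ) (ξ : ℕ → Ω → ℝ),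
        IsCompoundSum (poissonMeasure s) X μ' N ξ μ → ∀ u : ℝ, 0 ≤ u →
          (u ≤ α →
            μ.real {ω | ∑ i ∈ Finset.range (N ω), ξ i ω ≤ s * (μ'[X] - u)} ≤
              Real.exp (-(s * K * u ^ 2))) ∧
          (α ≤ u →
            μ.real {ω | ∑ i ∈ Finset.range (N ω), ξ i ω ≤ s * (μ'[X] - u)} ≤
              Real.exp (-(s * K * u))) := by
  obtain ⟨C, hC, hmgf⟩ := exists_mgf_neg_le hX hδ hexp
  refine ⟨C * δ, by positivity, min (1 / (4 * C)) (δ / 4), by positivity,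
    fun s Ω _ μ N ξ h u hu => ?_⟩
  have htail {θ r : ℝ} (hθ : θ ∈ Set.Icc 0 (δ / 2)) (hr : r ≤ θ * u - C * θ ^ 2) :
      μ.real {ω | ∑ i ∈ Finset.range (N ω), ξ i ω ≤ s * (μ'[X] - u)} ≤ Real.exp (-(s * r)) :=
    h.measureReal_sum_le_mul_sub_le_exp hθ.1
      (integrable_exp_mul_of_nonpos_of_ge hexp (neg_nonpos.2 hθ.1) (by linarith [hθ.2]))
      (hmgf θ hθ) hr
  simp only [mul_assoc (s : ℝ)]
  refine ⟨fun hα => htail (θ := u / (2 * C)) ⟨by positivity, ?_⟩ ?_,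
    fun hα => htail (θ := δ / 2) ⟨by positivity, le_rfl⟩ ?_⟩
  · rw [div_le_iff₀ (by positivity)]
    linarith
  · calc min (1 / (4 * C)) (δ / 4) * u ^ 2
        ≤ 1 / (4 * C) * u ^ 2 := by gcongr; exact min_le_left _ _
      _ = u / (2 * C) * u - C * (u / (2 * C)) ^ 2 := by field_simp; ring
  · calc min (1 / (4 * C)) (δ / 4) * u
        ≤ δ / 4 * u := by gcongr; exact min_le_right _ _
      _ ≤ δ / 2 * u - C * (δ / 2) ^ 2 := by nlinarith

end General

section MassFunction

variable {α : Type*} [MeasurableSpace α]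

/-- The measure with mass function `p`, which makes mass functions available to the general theory.
Negative values of `p` are truncated to `0` by `ENNReal.ofReal`. -/
noncomputable def massMeasure (p : α → ℝ) : Measure α :=
  Measure.sum fun x => ENNReal.ofReal (p x) • Measure.dirac x

lemma isProbabilityMeasure_massMeasure {p : α → ℝ} (hp0 : ∀ x, 0 ≤ p x) (hp : HasSum p 1) :
    IsProbabilityMeasure (massMeasure p) :=
  hp.isProbabilityMeasure_sum_dirac hp0

variable [MeasurableSingletonClass α]

lemma massMeasure_singleton (p : α → ℝ) (x : α) :
    massMeasure p {x} = ENNReal.ofReal (p x) :=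
  Measure.sum_smul_dirac_singleton

variable [Countable α]

lemma integrable_massMeasure_iff {p : α → ℝ} (hp0 : ∀ x, 0 ≤ p x) {f : α → ℝ} :
    Integrable f (massMeasure p) ↔ Summable fun x => |f x| * p x := by
  simp [massMeasure, integrable_sum_dirac_iff, hp0, mul_comm]

lemma integral_massMeasure {p : α → ℝ} (hp0 : ∀ x, 0 ≤ p x) (f : α → ℝ) :
    ∫ x, f x ∂massMeasure p = ∑' x, f x * p x := by
  simp [massMeasure, integral_sum_dirac, hp0, mul_comm]

variable {Ω : Type*} [MeasurableSpace Ω] {μ : Measure Ω}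

lemma hasLaw_of_measure_fiber_eq {ν : Measure α} {Y : Ω → α} (hY : AEMeasurable Y μ)
    (h : ∀ x, μ {ω | Y ω = x} = ν {x}) : HasLaw Y ν μ where
  aemeasurable := hY
  map_eq := Measure.ext_of_singleton fun x => by
    rw [Measure.map_apply_of_aemeasurable hY (measurableSet_singleton x), ← h x]
    rfl

end MassFunction

lemma memLp_of_integrable_exp_mul {Ω : Type*} [MeasurableSpace Ω] {μ : Measure Ω} {X : Ω → ℝ}
    {δ : ℝ} (hδ : 0 < δ)
    (hexp : ∀ θ, |θ| ≤ δ → Integrable (fun ω => Real.exp (θ * X ω)) μ) (q : ℝ≥0) :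
    MemLp X q μ := by
  refine memLp_of_mem_interior_integrableExpSet (mem_interior_iff_mem_nhds.2 ?_) q
  filter_upwards [Icc_mem_nhds (neg_lt_zero.2 hδ) hδ] with θ hθ
  exact hexp θ (abs_le.2 hθ)

lemma isCompoundSum_intCast {Ω : Type*} [MeasurableSpace Ω] {μ : Measure Ω} {p : ℤ → ℝ}
    {s : ℝ≥0} {N : Ω → ℕ} {ξ : ℕ → Ω → ℤ} (hN : AEMeasurable N μ)
    (hξ : ∀ i, AEMeasurable (ξ i) μ)
    (hN_law : ∀ k, μ {ω | N ω = k} = ENNReal.ofReal (Real.exp (-s) * s ^ k / k.factorial))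
    (hξ_law : ∀ i x, μ {ω | ξ i ω = x} = ENNReal.ofReal (p x))
    (hξ_indep : iIndepFun ξ μ) (hNξ : IndepFun N (fun ω i => ξ i ω) μ) :
    IsCompoundSum (poissonMeasure s) (fun x : ℤ => (x : ℝ)) (massMeasure p)
      N (fun i ω => (ξ i ω : ℝ)) μ where
  hasLaw_count := hasLaw_of_measure_fiber_eq hN fun k => by
    rw [hN_law, poissonMeasure_singleton]
  identDistrib i := by
    have hlaw : HasLaw (ξ i) (massMeasure p) μ :=
      hasLaw_of_measure_fiber_eq (hξ i) fun x => by rw [hξ_law, massMeasure_singleton]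
    exact (hlaw.identDistrib .id).comp (u := fun x : ℤ => (x : ℝ)) measurable_from_top
  iIndepFun := hξ_indep.comp (fun _ x => (x : ℝ)) fun _ => measurable_from_top
  indepFun := hNξ.comp (φ := id) (ψ := fun (x : ℕ → ℤ) i => (x i : ℝ)) measurable_id
    (measurable_pi_lambda _ fun i => measurable_from_top.comp (measurable_pi_apply i))

/-- The large deviation bounds (4.16)–(4.17): if the jump distribution `p` on `ℤ`
has finite exponential moments for `|θ| ≤ δ` and mean `b = Σ x·p(x)`, then there
are constants `α > 0` and `K > 0` such that for every `s > 0`, the compound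
Poisson variable `X_s = Σ_{i=1}^N ξ_i` (with `N ~ Poisson(s)` independent of the
i.i.d. sequence `(ξ_i)` with distribution `p`) satisfies
`P(X_s ≤ s(b − u)) ≤ exp(−sKu²)` for `0 ≤ u ≤ α` and
`P(X_s ≤ s(b − u)) ≤ exp(−sKu)` for `u ≥ α`. -/
theorem compound_poisson_lower_tail_bound
    (p : ℤ → ℝ) (hp0 : ∀ x, 0 ≤ p x) (hpsum : Summable p) (hp1 : (∑' x : ℤ, p x) = 1)
    (δ : ℝ) (hδ : 0 < δ)
    (hexp : ∀ θ : ℝ, |θ| ≤ δ → Summable fun x : ℤ => Real.exp (θ * x) * p x) :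
    ∃ α : ℝ, 0 < α ∧ ∃ K : ℝ, 0 < K ∧
      ∀ (s : ℝ), 0 < s →
      ∀ (Ω : Type) [MeasureSpace Ω] [IsProbabilityMeasure (ℙ : Measure Ω)]
        (N : Ω → ℕ) (ξ : ℕ → Ω → ℤ),
        Measurable N → (∀ i, Measurable (ξ i)) →
        (∀ k : ℕ, ℙ {ω | N ω = k}
          = ENNReal.ofReal (Real.exp (-s) * s ^ k / (Nat.factorial k))) →
        (∀ i x, ℙ {ω | ξ i ω = x} = ENNReal.ofReal (p x)) →
        iIndepFun ξ ℙ →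
        IndepFun N (fun ω => fun i => ξ i ω) ℙ →
        ∀ u : ℝ, 0 ≤ u →
          (u ≤ α →
            ℙ {ω | ((∑ i ∈ Finset.range (N ω), ξ i ω : ℤ) : ℝ)
                  ≤ s * ((∑' x : ℤ, (x : ℝ) * p x) - u)}
              ≤ ENNReal.ofReal (Real.exp (-(s * K * u ^ 2)))) ∧
          (α ≤ u →
            ℙ {ω | ((∑ i ∈ Finset.range (N ω), ξ i ω : ℤ) : ℝ)
                  ≤ s * ((∑' x : ℤ, (x : ℝ) * p x) - u)}
              ≤ ENNReal.ofReal (Real.exp (-(s * K * u)))) := by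
  have := isProbabilityMeasure_massMeasure hp0 (hp1 ▸ hpsum.hasSum)
  have hint (θ : ℝ) (hθ : |θ| ≤ δ) :
      Integrable (fun x : ℤ => Real.exp (θ * x)) (massMeasure p) := by
    simpa only [integrable_massMeasure_iff hp0, Real.abs_exp] using hexp θ hθ
  obtain ⟨α, hα, K, hK, htail⟩ := compound_poisson_lower_tail_bound_general
    (memLp_of_integrable_exp_mul hδ hint 2) hδ (hint (-δ) (by rw [abs_neg, abs_of_pos hδ]))
  refine ⟨α, hα, K, hK, fun s hs Ω _ _ N ξ hN hξ hN_law hξ_law hξ_indep hNξ u hu => ?_⟩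
  lift s to ℝ≥0 using hs.le
  have h := htail s Ω ℙ N _ (isCompoundSum_intCast hN.aemeasurable (fun i => (hξ i).aemeasurable)
    hN_law hξ_law hξ_indep hNξ) u hu
  simpa only [integral_massMeasure hp0, Int.cast_sum, Measure.real,
    ENNReal.le_ofReal_iff_toReal_le (measure_ne_top _ _) (Real.exp_pos _).le] using h
end

section
/- There is a universal constant c < ∞ with the following property. Let n ≥ 1 be an integer, a, b > 0, and C ≥ 1, C₁ ≥ 0 constants. Let (X_i)_{i≥1} be mutually independent nonnegative real random variables with E[X_i] ≤ C − 1 and Var[X_i] ≤ C₁ for all i. Then P( there exist integers ℓ and k with 1 ≤ ℓ ≤ an and n^{2/3} ≤ k ≤ bn such that Σ_{i=ℓ}^{ℓ+k−1} X_i ≥ 3Ck ) ≤ c · C₁ (a + b + 1) n^{−1/3}. -/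
open MeasureTheory ProbabilityTheory

/-! Cut `ℕ` into consecutive blocks of length `m = ⌈n^{2/3}⌉`. A window of length `k ≥ m` meets
fewer than `k / m + 2 ≤ 3k / m` blocks, so if it sums to at least `3Ck` then, by nonnegativity and
the pigeonhole principle, some block it meets sums to at least `Cm`, exceeding its mean by at least
`m`. Chebyshev's inequality bounds the probability of this for a single block by `C₁ / m`, and at
most `(a + b)n / m + 1` blocks are available, so by the union bound the probability is at most
`C₁((a + b)n / m + 1) / m ≤ C₁(a + b + 1)n^{-1/3}`. -/

section Blocks

open Finset

lemma sum_Ico_le_sum_blocks {M : Type*} [AddCommMonoid M] [PartialOrder M]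
    [IsOrderedAddMonoid M] {f : ℕ → M} (hf : ∀ i, 0 ≤ f i) {m : ℕ} (hm : 0 < m) (a b : ℕ) :
    ∑ i ∈ Ico a b, f i ≤ ∑ j ∈ Ico (a / m) (b / m + 1), ∑ i ∈ Ico (m * j) (m * (j + 1)), f i := by
  have div_mem : ∀ i ∈ Ico a b, i / m ∈ Ico (a / m) (b / m + 1) := fun i hi ↦ by
    rw [mem_Ico] at hi ⊢
    exact ⟨Nat.div_le_div_right hi.1, Nat.lt_succ_of_le (Nat.div_le_div_right hi.2.le)⟩
  rw [← sum_fiberwise_of_maps_to div_mem]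
  refine sum_le_sum fun j _ ↦ sum_le_sum_of_subset_of_nonneg (fun i hi ↦ ?_) fun i _ _ ↦ hf i
  obtain ⟨-, rfl⟩ := mem_filter.1 hi
  exact mem_Ico.2 ⟨Nat.mul_div_le i m, Nat.lt_mul_div_succ i hm⟩

lemma mul_div_add_one_sub_div_le {m k : ℕ} (hm : 0 < m) (hmk : m ≤ k) (ℓ : ℕ) :
    m * ((ℓ + k) / m + 1 - ℓ / m) ≤ 3 * k := by
  have hℓ : ℓ < m * (ℓ / m + 1) := Nat.lt_mul_div_succ ℓ hm
  have hℓk : m * ((ℓ + k) / m) ≤ ℓ + k := Nat.mul_div_le (ℓ + k) m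
  rw [Nat.mul_sub]
  lia

lemma exists_block_mul_le_sum {R : Type*} [CommRing R] [LinearOrder R] [IsStrictOrderedRing R]
    {f : ℕ → R} (hf : ∀ i, 0 ≤ f i) {m k ℓ : ℕ} (hm : 0 < m) (hmk : m ≤ k) {c : R} (hc : 0 ≤ c)
    (h : 3 * c * k ≤ ∑ i ∈ Ico ℓ (ℓ + k), f i) :
    ∃ j ≤ (ℓ + k) / m, c * m ≤ ∑ i ∈ Ico (m * j) (m * (j + 1)), f i := by
  have nonempty : (Ico (ℓ / m) ((ℓ + k) / m + 1)).Nonempty :=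
    nonempty_Ico.2 (Nat.lt_succ_of_le (Nat.div_le_div_right (Nat.le_add_right ℓ k)))
  have card_le : (m : R) * #(Ico (ℓ / m) ((ℓ + k) / m + 1)) ≤ 3 * k := by
    rw [Nat.card_Ico]
    exact_mod_cast mul_div_add_one_sub_div_le hm hmk ℓ
  obtain ⟨j, hj, hcj⟩ := exists_le_of_sum_le nonempty <|
    calc ∑ _j ∈ Ico (ℓ / m) ((ℓ + k) / m + 1), c * m
        = c * (m * #(Ico (ℓ / m) ((ℓ + k) / m + 1))) := by rw [sum_const, nsmul_eq_mul]; ring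
      _ ≤ c * (3 * k) := by gcongr
      _ = 3 * c * k := by ring
      _ ≤ ∑ i ∈ Ico ℓ (ℓ + k), f i := h
      _ ≤ ∑ j ∈ Ico (ℓ / m) ((ℓ + k) / m + 1), ∑ i ∈ Ico (m * j) (m * (j + 1)), f i :=
        sum_Ico_le_sum_blocks hf hm ℓ (ℓ + k)
  exact ⟨j, Nat.le_of_lt_succ (mem_Ico.1 hj).2, hcj⟩

end Blocks

lemma mul_div_add_one_div_le_rpow {t n m : ℝ} (ht : 0 ≤ t) (hn : 1 ≤ n)
    (hm : n ^ ((2 : ℝ) / 3) ≤ m) :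
    (t * n / m + 1) / m ≤ (t + 1) * n ^ (-(1 : ℝ) / 3) := by
  have n_pos : 0 < n := one_pos.trans_le hn
  set p := n ^ ((2 : ℝ) / 3) with hp
  have : 0 < p := Real.rpow_pos_of_pos n_pos _
  have n_div_sq : n / p / p = n ^ (-(1 : ℝ) / 3) := by
    rw [div_div, hp, ← Real.rpow_add n_pos, ← Real.rpow_one_sub' n_pos.le (by norm_num)]
    norm_num
  have inv_le : p⁻¹ ≤ n ^ (-(1 : ℝ) / 3) := by
    rw [hp, ← Real.rpow_neg n_pos.le]
    exact Real.rpow_le_rpow_of_exponent_le hn (by norm_num)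
  calc (t * n / m + 1) / m ≤ (t * n / p + 1) / p := by gcongr
    _ = t * (n / p / p) + p⁻¹ := by ring
    _ ≤ t * n ^ (-(1 : ℝ) / 3) + n ^ (-(1 : ℝ) / 3) := by rw [n_div_sq]; gcongr
    _ = (t + 1) * n ^ (-(1 : ℝ) / 3) := by ring

section Probability

variable {ι Ω : Type*} {mΩ : MeasurableSpace Ω} {μ : Measure Ω} [IsFiniteMeasure μ]

lemma variance_sum_le_of_covariance_nonpos {s : Finset ι} {X : ι → Ω → ℝ}
    (hX : ∀ i ∈ s, MemLp (X i) 2 μ)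
    (hcov : (s : Set ι).Pairwise fun i j ↦ cov[X i, X j; μ] ≤ 0) :
    Var[∑ i ∈ s, X i; μ] ≤ ∑ i ∈ s, Var[X i; μ] := by
  classical
  rw [variance_sum' hX]
  refine Finset.sum_le_sum fun i hi ↦ ?_
  rw [← Finset.add_sum_erase s _ hi, covariance_self (hX i hi).aemeasurable]
  refine add_le_of_nonpos_right (Finset.sum_nonpos fun j hj ↦ ?_)
  exact hcov hi (Finset.mem_of_mem_erase hj) (Finset.ne_of_mem_erase hj).symm

lemma measure_mul_card_le_sum_le {s : Finset ι} (hs : s.Nonempty) {X : ι → Ω → ℝ}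
    (hX : ∀ i ∈ s, MemLp (X i) 2 μ)
    (hcov : (s : Set ι).Pairwise fun i j ↦ cov[X i, X j; μ] ≤ 0) {e v δ : ℝ}
    (hmean : ∀ i ∈ s, μ[X i] ≤ e) (hvar : ∀ i ∈ s, Var[X i; μ] ≤ v) (hδ : 0 < δ) :
    μ {ω | (e + δ) * s.card ≤ ∑ i ∈ s, X i ω} ≤ ENNReal.ofReal (v / (δ ^ 2 * s.card)) := by
  have : (0 : ℝ) < s.card := by exact_mod_cast hs.card_pos
  have mean_le : μ[∑ i ∈ s, X i] ≤ s.card * e := by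
    simp only [Finset.sum_apply]
    rw [integral_finsetSum s fun i hi ↦ (hX i hi).integrable one_le_two, ← nsmul_eq_mul]
    exact Finset.sum_le_card_nsmul s _ e hmean
  have variance_le : Var[∑ i ∈ s, X i; μ] ≤ s.card * v := by
    rw [← nsmul_eq_mul]
    exact (variance_sum_le_of_covariance_nonpos hX hcov).trans
      (Finset.sum_le_card_nsmul s _ v hvar)
  calc μ {ω | (e + δ) * s.card ≤ ∑ i ∈ s, X i ω}
      ≤ μ {ω | δ * s.card ≤ |(∑ i ∈ s, X i) ω - μ[∑ i ∈ s, X i]|} := by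
        refine measure_mono fun ω (hω : (e + δ) * s.card ≤ ∑ i ∈ s, X i ω) ↦ ?_
        rw [← Finset.sum_apply] at hω
        have deviation : δ * s.card ≤ (∑ i ∈ s, X i) ω - μ[∑ i ∈ s, X i] := by linarith
        exact deviation.trans (le_abs_self _)
    _ ≤ ENNReal.ofReal (Var[∑ i ∈ s, X i; μ] / (δ * s.card) ^ 2) :=
        meas_ge_le_variance_div_sq (memLp_finsetSum' s hX) (by positivity)
    _ ≤ ENNReal.ofReal (s.card * v / (δ * s.card) ^ 2) := by gcongr
    _ = ENNReal.ofReal (v / (δ ^ 2 * s.card)) := by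
        congr 1
        field_simp

variable {X : ℕ → Ω → ℝ}

lemma measure_exists_three_mul_le_sum_Ico_le (hnonneg : ∀ i, 0 ≤ᵐ[μ] X i)
    (hX : ∀ i, MemLp (X i) 2 μ) (hcov : Pairwise fun i j ↦ cov[X i, X j; μ] ≤ 0) {e v δ : ℝ}
    (hmean : ∀ i, μ[X i] ≤ e) (hvar : ∀ i, Var[X i; μ] ≤ v) (hδ : 0 < δ) {m : ℕ} (hm : 0 < m)
    (N : ℕ) :
    μ {ω | ∃ ℓ k : ℕ, m ≤ k ∧ ℓ + k ≤ N ∧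
        3 * (e + δ) * k ≤ ∑ i ∈ Finset.Ico ℓ (ℓ + k), X i ω}
      ≤ ENNReal.ofReal (v / δ ^ 2 * ((N / m + 1) / m)) := by
  have e_nonneg : 0 ≤ e := (integral_nonneg_of_ae (hnonneg 0)).trans (hmean 0)
  have v_nonneg : 0 ≤ v := (variance_nonneg _ _).trans (hvar 0)
  let block (j : ℕ) : Finset ℕ := Finset.Ico (m * j) (m * (j + 1))
  have card_block (j : ℕ) : (block j).card = m := by simp [block, mul_add]
  have measure_block_le (j : ℕ) : μ {ω | (e + δ) * m ≤ ∑ i ∈ block j, X i ω}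
      ≤ ENNReal.ofReal (v / (δ ^ 2 * m)) := by
    have nonempty : (block j).Nonempty := Finset.card_pos.1 (hm.trans_eq (card_block j).symm)
    simpa only [card_block] using measure_mul_card_le_sum_le nonempty (fun i _ ↦ hX i)
      (hcov.set_pairwise _) (fun i _ ↦ hmean i) (fun i _ ↦ hvar i) hδ
  calc μ {ω | ∃ ℓ k : ℕ, m ≤ k ∧ ℓ + k ≤ N ∧
          3 * (e + δ) * k ≤ ∑ i ∈ Finset.Ico ℓ (ℓ + k), X i ω}
      ≤ μ (⋃ j ∈ Finset.range (N / m + 1), {ω | (e + δ) * m ≤ ∑ i ∈ block j, X i ω}) := by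
        refine measure_mono_ae ?_
        filter_upwards [ae_all_iff.2 hnonneg] with ω hω
        rintro ⟨ℓ, k, hmk, hℓk, hsum⟩
        obtain ⟨j, hj, hjsum⟩ := exists_block_mul_le_sum hω hm hmk (by positivity) hsum
        exact Set.mem_biUnion
          (Finset.mem_range_succ_iff.2 (hj.trans (Nat.div_le_div_right hℓk))) hjsum
    _ ≤ ∑ j ∈ Finset.range (N / m + 1), μ {ω | (e + δ) * m ≤ ∑ i ∈ block j, X i ω} :=
        measure_biUnion_finset_le _ _
    _ ≤ (N / m + 1) • ENNReal.ofReal (v / (δ ^ 2 * m)) := by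
        simpa only [Finset.card_range] using
          Finset.sum_le_card_nsmul (Finset.range (N / m + 1)) _ _ fun j _ ↦ measure_block_le j
    _ = ENNReal.ofReal (v / δ ^ 2 * (((N / m : ℕ) + 1) / m)) := by
        rw [← ENNReal.ofReal_nsmul, nsmul_eq_mul]
        push_cast
        congr 1
        field_simp
    _ ≤ ENNReal.ofReal (v / δ ^ 2 * ((N / m + 1) / m)) := by
        gcongr
        exact Nat.cast_div_le

theorem maximal_block_sum_bound_general (hnonneg : ∀ i, 0 ≤ᵐ[μ] X i)
    (hX : ∀ i, MemLp (X i) 2 μ) (hcov : Pairwise fun i j ↦ cov[X i, X j; μ] ≤ 0) {C C₁ : ℝ}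
    (hmean : ∀ i, μ[X i] ≤ C - 1) (hvar : ∀ i, Var[X i; μ] ≤ C₁) {n a b : ℝ} (hn : 1 ≤ n)
    (ha : 0 ≤ a) (hb : 0 ≤ b) :
    μ {ω | ∃ ℓ k : ℕ, 1 ≤ ℓ ∧ ℓ ≤ a * n ∧ n ^ ((2 : ℝ) / 3) ≤ k ∧ k ≤ b * n ∧
        3 * C * k ≤ ∑ i ∈ Finset.Ico ℓ (ℓ + k), X i ω}
      ≤ ENNReal.ofReal (C₁ * (a + b + 1) * n ^ (-(1 : ℝ) / 3)) := by
  have C₁_nonneg : 0 ≤ C₁ := (variance_nonneg _ _).trans (hvar 0)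
  set m := ⌈n ^ ((2 : ℝ) / 3)⌉₊
  set N := ⌊(a + b) * n⌋₊
  have m_pos : 0 < m := Nat.ceil_pos.2 (by positivity)
  calc _ ≤ μ {ω | ∃ ℓ k : ℕ, m ≤ k ∧ ℓ + k ≤ N ∧
          3 * (C - 1 + 1) * k ≤ ∑ i ∈ Finset.Ico ℓ (ℓ + k), X i ω} := by
        refine measure_mono fun ω ⟨ℓ, k, _, hℓ, hk, hkb, hsum⟩ ↦
          ⟨ℓ, k, Nat.ceil_le.2 hk, Nat.le_floor ?_, by rwa [sub_add_cancel]⟩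
        push_cast
        linarith
    _ ≤ ENNReal.ofReal (C₁ / 1 ^ 2 * ((N / m + 1) / m)) :=
        measure_exists_three_mul_le_sum_Ico_le hnonneg hX hcov hmean hvar one_pos m_pos N
    _ ≤ ENNReal.ofReal (C₁ * (((a + b) * n / m + 1) / m)) := by
        rw [one_pow, div_one]
        gcongr
        exact Nat.floor_le (by positivity)
    _ ≤ ENNReal.ofReal (C₁ * (a + b + 1) * n ^ (-(1 : ℝ) / 3)) := by
        rw [mul_assoc C₁]
        gcongr
        exact mul_div_add_one_div_le_rpow (by positivity) hn (Nat.le_ceil _)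

end Probability

/-- The maximal inequality (5.9): there is a universal constant `c` such that
for mutually independent nonnegative random variables `(X_i)` with
`E[X_i] ≤ C − 1` and `Var[X_i] ≤ C₁`,
`P(∃ ℓ, k with 1 ≤ ℓ ≤ an, n^{2/3} ≤ k ≤ bn and Σ_{i=ℓ}^{ℓ+k−1} X_i ≥ 3Ck)
  ≤ c·C₁(a + b + 1)n^{−1/3}`. -/
theorem maximal_block_sum_bound :
    ∃ c : ℝ, ∀ (Ω : Type) [MeasureSpace Ω] [IsProbabilityMeasure (ℙ : Measure Ω)]
      (n : ℕ), 1 ≤ n → ∀ (a b C C₁ : ℝ), 0 < a → 0 < b → 1 ≤ C → 0 ≤ C₁ →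
      ∀ (X : ℕ → Ω → ℝ),
      (∀ i, Measurable (X i)) →
      (∀ i ω, 0 ≤ X i ω) →
      iIndepFun X ℙ →
      (∀ i, MemLp (X i) 2 ℙ) →
      (∀ i, (∫ ω, X i ω) ≤ C - 1) →
      (∀ i, variance (X i) ℙ ≤ C₁) →
      ℙ {ω | ∃ ℓ k : ℕ, 1 ≤ ℓ ∧ (ℓ : ℝ) ≤ a * n ∧
            (n : ℝ) ^ ((2 : ℝ) / 3) ≤ (k : ℝ) ∧ (k : ℝ) ≤ b * n ∧
            3 * C * k ≤ ∑ i ∈ Finset.Ico ℓ (ℓ + k), X i ω}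
        ≤ ENNReal.ofReal (c * C₁ * (a + b + 1) * (n : ℝ) ^ (-(1 : ℝ) / 3)) := by
  refine ⟨1, fun Ω _ _ n hn a b C C₁ ha hb _ _ X _ hpos hind hX hmean hvar ↦ ?_⟩
  simpa only [one_mul] using maximal_block_sum_bound_general (fun i ↦ .of_forall (hpos i)) hX
    (fun i j hij ↦ ((hind.indepFun hij).covariance_eq_zero (hX i) (hX j)).le) hmean hvar
    (Nat.one_le_cast.2 hn) ha.le hb.le
end
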